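/- Let (r_k)_{k≥1} and (s_ℓ)_{ℓ≥1} be an admissible pair of sequences. If (r_k + i, s_ℓ − i − 1) = (r_{k'} + j, s_{ℓ'} − j − 1) where k, ℓ, k', ℓ' ≥ 1, 0 ≤ i ≤ s_ℓ − 1 and 0 ≤ j ≤ s_{ℓ'} − 1, then k = k', ℓ = ℓ' and i = j. In other words, the elements of the set F = {(r_k + i, s_ℓ − i − 1) : k, ℓ ≥ 1, 0 ≤ i ≤ s_ℓ − 1} have pairwise distinct parameter representations. -/

import Mathlib

/-- An *admissible pair of sequences* consists of sequences of natural numbers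
`(r k)` and `(s ℓ)` (only the values at indices `k ≥ 1` matter) satisfying:
`s 1 = 2`; `s k < r k < s (k+1)` for all `k ≥ 1`; `s (k+1) > 3 * r k` for all
`k ≥ 1`; and `r k > 2 * s k` for all `k ≥ 1`. -/
def AdmissiblePair (r s : ℕ → ℕ) : Prop :=
  s 1 = 2 ∧ (∀ k, 1 ≤ k → s k < r k) ∧ (∀ k, 1 ≤ k → r k < s (k + 1)) ∧
    (∀ k, 1 ≤ k → 3 * r k < s (k + 1)) ∧ (∀ k, 1 ≤ k → 2 * s k < r k)

/-- The set `F = {(r k + i, s ℓ - i - 1) : k, ℓ ≥ 1, 0 ≤ i ≤ s ℓ - 1} ⊆ ℕ × ℕ`. -/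
def pairSetF (r s : ℕ → ℕ) : Set (ℕ × ℕ) :=
  {p | ∃ k ℓ i : ℕ, 1 ≤ k ∧ 1 ≤ ℓ ∧ i ≤ s ℓ - 1 ∧ p = (r k + i, s ℓ - i - 1)}

theorem AdmissiblePair.s_le {r s : ℕ → ℕ} (h : AdmissiblePair r s) {k m : ℕ}
    (hk : 1 ≤ k) (hkm : k ≤ m) : s k ≤ s m := by
  obtain ⟨-, hsr, hrs, -, -⟩ := h
  induction m, hkm using Nat.le_induction with
  | base => exact le_rfl
  | succ n hn ih =>
    have h1 := hsr n (hk.trans hn)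
    have h2 := hrs n (hk.trans hn)
    omega

theorem AdmissiblePair.three_mul_r_lt {r s : ℕ → ℕ} (h : AdmissiblePair r s) {k m : ℕ}
    (hk : 1 ≤ k) (hkm : k < m) : 3 * r k < s m :=
  (h.2.2.2.1 k hk).trans_le (h.s_le (Nat.le_add_left 1 k) hkm)

theorem AdmissiblePair.s_lt {r s : ℕ → ℕ} (h : AdmissiblePair r s) {k m : ℕ}
    (hk : 1 ≤ k) (hkm : k < m) : s k < s m := by
  have h1 := h.three_mul_r_lt hk hkm
  have h2 := h.2.1 k hk
  omega

theorem AdmissiblePair.le_of_add_eq_add {r s : ℕ → ℕ} (h : AdmissiblePair r s)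
    {k ℓ k' ℓ' : ℕ} (hk : 1 ≤ k) (hℓ : 1 ≤ ℓ) (hk' : 1 ≤ k') (hℓ' : 1 ≤ ℓ')
    (heq : r k + s ℓ = r k' + s ℓ') : k' ≤ k := by
  by_contra! hlt
  have h1 := h.three_mul_r_lt hk hlt
  have h2 := h.2.2.2.2 k' hk'
  have hℓlt : ℓ' < ℓ := by
    by_contra! hle
    have h3 := h.s_le hℓ hle
    omega
  have h3 := h.three_mul_r_lt hℓ' hℓlt
  have h4 := h.2.2.2.2 ℓ' hℓ'
  rcases le_or_gt ℓ k' with hle | hgt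
  · have h5 := h.s_le hℓ hle
    omega
  · have h5 := h.three_mul_r_lt hk' hgt
    omega

/-- The elements of `F` have pairwise distinct parameter representations: if
`(r k + i, s ℓ - i - 1) = (r k' + j, s ℓ' - j - 1)` with `k, ℓ, k', ℓ' ≥ 1`,
`0 ≤ i ≤ s ℓ - 1` and `0 ≤ j ≤ s ℓ' - 1`, then `k = k'`, `ℓ = ℓ'` and `i = j`. -/
theorem pairSetF_parametrization_injective (r s : ℕ → ℕ) (h : AdmissiblePair r s)
    (k ℓ i k' ℓ' j : ℕ) (hk : 1 ≤ k) (hℓ : 1 ≤ ℓ) (hk' : 1 ≤ k') (hℓ' : 1 ≤ ℓ')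
    (hi : i ≤ s ℓ - 1) (hj : j ≤ s ℓ' - 1)
    (heq : ((r k + i, s ℓ - i - 1) : ℕ × ℕ) = (r k' + j, s ℓ' - j - 1)) :
    k = k' ∧ ℓ = ℓ' ∧ i = j := by
  have hsℓ := h.s_le le_rfl hℓ
  have hsℓ' := h.s_le le_rfl hℓ'
  rw [h.1] at hsℓ hsℓ'
  obtain ⟨h1, h2⟩ := Prod.mk.inj heq
  have hsum : r k + s ℓ = r k' + s ℓ' := by omega
  obtain rfl : k = k' := le_antisymm
    (h.le_of_add_eq_add hk' hℓ' hk hℓ hsum.symm) (h.le_of_add_eq_add hk hℓ hk' hℓ' hsum)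
  refine ⟨rfl, ?_, by omega⟩
  rcases lt_trichotomy ℓ ℓ' with hlt | rfl | hgt
  · have h3 := h.s_lt hℓ hlt
    omega
  · rfl
  · have h3 := h.s_lt hℓ' hgt
    omega
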